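/- Let α be a real number with 0 < α < 1. For (λ₁, λ₂) ∈ (0,1)² define I(λ₁, λ₂) = ∫_0^1 ( ∫_0^x x^{−α}(1−x)^{−α}(1−λ₁x)^{−α} · y^{α−1}(1−y)^{α−1}(1−λ₂y)^{α−1} dy ) dx. Then for all (λ₁, λ₂) ∈ (0,1)² with λ₁ ≠ λ₂: λ₁(1−λ₁)·(∂²I/∂λ₁²)(λ₁,λ₂) + 2(1−α−λ₁)·(∂I/∂λ₁)(λ₁,λ₂) − α(1−α)·I(λ₁,λ₂) = (1/(λ₁−λ₂)) · ( ((1−λ₂)/(1−λ₁))^{α} − 1 ). -/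

import Mathlib

open Real

/-- The double integral
`I(λ₁, λ₂) = ∫₀¹ (∫₀ˣ x^(−α)(1−x)^(−α)(1−λ₁x)^(−α) · y^(α−1)(1−y)^(α−1)(1−λ₂y)^(α−1) dy) dx`. -/
noncomputable def Idbl (α l₁ l₂ : ℝ) : ℝ :=
  ∫ x in (0 : ℝ)..1, ∫ y in (0 : ℝ)..x,
    x ^ (-α) * (1 - x) ^ (-α) * (1 - l₁ * x) ^ (-α) *
      (y ^ (α - 1) * (1 - y) ^ (α - 1) * (1 - l₂ * y) ^ (α - 1))

lemma aux_beta {a : ℝ} (ha : 0 < a) :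
    IntervalIntegrable (fun x : ℝ => x ^ (a - 1) * (1 - x) ^ (a - 1)) MeasureTheory.volume 0 1 := by
  have h := (Complex.betaIntegral_convergent (u := (a : ℂ)) (v := (a : ℂ))
    (by simpa using ha) (by simpa using ha)).norm
  refine h.congr_ae ?_
  have hne : ∀ᵐ x : ℝ ∂(MeasureTheory.volume.restrict (Set.uIoc (0:ℝ) 1)), x ≠ 1 :=
    MeasureTheory.ae_restrict_of_ae (MeasureTheory.Measure.ae_ne _ _)
  filter_upwards [hne, MeasureTheory.ae_restrict_mem measurableSet_uIoc] with x hx1 hx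
  rw [Set.uIoc_of_le zero_le_one] at hx
  have h0 : 0 < x := hx.1
  have h1 : 0 < 1 - x := by
    have := lt_of_le_of_ne hx.2 hx1
    linarith
  have e1 : ((a : ℂ) - 1) = ((a - 1 : ℝ) : ℂ) := by push_cast; rfl
  have e2 : (1 - (x : ℂ)) = ((1 - x : ℝ) : ℂ) := by push_cast; rfl
  rw [norm_mul, e1, e2, Complex.norm_cpow_eq_rpow_re_of_pos h0,
    Complex.norm_cpow_eq_rpow_re_of_pos h1, Complex.ofReal_re]

lemma aux_pos {t x : ℝ} (ht0 : 0 < t) (ht : t < 1) (hx0 : 0 ≤ x) (hx1 : x ≤ 1) :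
    0 < 1 - t * x := by nlinarith

lemma aux_cont (p : ℝ) {t : ℝ} (ht0 : 0 < t) (ht : t < 1) :
    ContinuousOn (fun x : ℝ => (1 - t * x) ^ p) (Set.Icc 0 1) := by
  refine ContinuousOn.rpow_const (by fun_prop) ?_
  intro x hx
  exact Or.inl (aux_pos ht0 ht hx.1 hx.2).ne'

lemma aux_int {h : ℝ → ℝ} (hh : IntervalIntegrable h MeasureTheory.volume 0 1) {φ : ℝ → ℝ}
    (hφ : ContinuousOn φ (Set.Icc 0 1)) :
    IntervalIntegrable (fun x => h x * φ x) MeasureTheory.volume 0 1 :=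
  hh.mul_continuousOn (by rwa [Set.uIcc_of_le zero_le_one])

lemma aux_deriv {h : ℝ → ℝ} (hh : IntervalIntegrable h MeasureTheory.volume 0 1) {s : ℝ}
    (hs : 0 < s) {l : ℝ} (hl0 : 0 < l) (hl : l < 1) :
    HasDerivAt (fun t => ∫ x in (0:ℝ)..1, h x * (1 - t * x) ^ (-s))
      (∫ x in (0:ℝ)..1, (h x * (s * x)) * (1 - l * x) ^ (-(s + 1))) l := by
  set δ : ℝ := (1 - l) / 2 with hδ
  have hδ0 : 0 < δ := by linarith
  refine (intervalIntegral.hasDerivAt_integral_of_dominated_loc_of_deriv_le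
    (F := fun t x => h x * (1 - t * x) ^ (-s))
    (F' := fun t x => (h x * (s * x)) * (1 - t * x) ^ (-(s + 1)))
    (bound := fun x => ‖h x‖ * (s * δ ^ (-(s+1))))
    (s := Set.Ioo 0 (1 - δ)) (Ioo_mem_nhds hl0 (by linarith)) ?_ ?_ ?_ ?_ ?_ ?_).2
  · filter_upwards [Ioo_mem_nhds hl0 hl] with t ht
    have := (aux_int hh (aux_cont (-s) ht.1 ht.2)).aestronglyMeasurable
    rwa [Set.uIoc_of_le zero_le_one]
  · exact aux_int hh (aux_cont (-s) hl0 hl)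
  · have := (aux_int (aux_int hh (φ := fun x => s * x) (by fun_prop))
      (aux_cont (-(s+1)) hl0 hl)).aestronglyMeasurable
    rwa [Set.uIoc_of_le zero_le_one]
  · refine Filter.Eventually.of_forall fun x hx t ht => ?_
    rw [Set.uIoc_of_le zero_le_one] at hx
    have hp : δ ≤ 1 - t * x := by nlinarith [hx.1, hx.2, ht.1, ht.2]
    have hp0 : 0 < 1 - t * x := by linarith
    have hq : (1 - t * x) ^ (-(s+1)) ≤ δ ^ (-(s+1)) :=
      Real.rpow_le_rpow_of_nonpos hδ0 hp (by linarith)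
    have hq0 : 0 < (1 - t * x) ^ (-(s+1)) := Real.rpow_pos_of_pos hp0 _
    rw [mul_assoc, norm_mul]
    refine mul_le_mul_of_nonneg_left ?_ (norm_nonneg _)
    have hx0 := hx.1
    rw [Real.norm_of_nonneg (by positivity)]
    have : s * x ≤ s := by nlinarith [hx.2]
    exact mul_le_mul this hq hq0.le hs.le
  · exact hh.norm.mul_const _
  · refine Filter.Eventually.of_forall fun x hx t ht => ?_
    rw [Set.uIoc_of_le zero_le_one] at hx
    have hp0 : 0 < 1 - t * x := aux_pos ht.1 (by linarith [ht.2]) hx.1.le hx.2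
    have h1 : HasDerivAt (fun t : ℝ => 1 - t * x) (-x) t := by
      simpa using ((hasDerivAt_id t).mul_const x).const_sub 1
    have h2 := (h1.rpow_const (p := -s) (Or.inl hp0.ne')).const_mul (h x)
    refine h2.congr_deriv ?_
    rw [show -s - 1 = -(s+1) by ring]
    ring

/-- For `0 < α < 1` and distinct `λ₁, λ₂ ∈ (0,1)`, the
inhomogeneous Picard–Fuchs equation in `λ₁` holds:
`λ₁(1−λ₁) ∂²I/∂λ₁² + 2(1−α−λ₁) ∂I/∂λ₁ − α(1−α) I
  = (1/(λ₁−λ₂)) (((1−λ₂)/(1−λ₁))^α − 1)`. -/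
theorem stmt5 (α : ℝ) (hα0 : 0 < α) (hα1 : α < 1)
    (l₁ l₂ : ℝ) (hl₁ : l₁ ∈ Set.Ioo (0 : ℝ) 1) (hl₂ : l₂ ∈ Set.Ioo (0 : ℝ) 1)
    (hne : l₁ ≠ l₂) :
    l₁ * (1 - l₁) * deriv (deriv (fun t : ℝ => Idbl α t l₂)) l₁
      + 2 * (1 - α - l₁) * deriv (fun t : ℝ => Idbl α t l₂) l₁
      - α * (1 - α) * Idbl α l₁ l₂
      = (1 / (l₁ - l₂)) * (((1 - l₂) / (1 - l₁)) ^ α - 1) := by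
  have h0 := hl₁.1
  have h1 := hl₁.2
  set g : ℝ → ℝ := fun y => y ^ (α - 1) * (1 - y) ^ (α - 1) * (1 - l₂ * y) ^ (α - 1) with hg
  set G : ℝ → ℝ := fun x => ∫ y in (0:ℝ)..x, g y with hG
  have hgi : IntervalIntegrable g MeasureTheory.volume 0 1 :=
    aux_int (aux_beta hα0) (aux_cont (α - 1) hl₂.1 hl₂.2)
  have hGc : ContinuousOn G (Set.Icc 0 1) := by
    have := intervalIntegral.continuousOn_primitive_interval' (a := 0) hgi (by simp)
    rwa [Set.uIcc_of_le zero_le_one] at this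
  set h : ℝ → ℝ := fun x => x ^ (-α) * (1 - x) ^ (-α) * G x with hh
  have hhi : IntervalIntegrable h MeasureTheory.volume 0 1 := by
    have := aux_beta (a := 1 - α) (by linarith)
    rw [show 1 - α - 1 = -α by ring] at this
    exact aux_int this hGc
  have hI : ∀ t, Idbl α t l₂ = ∫ x in (0:ℝ)..1, h x * (1 - t * x) ^ (-α) := by
    intro t
    unfold Idbl
    congr 1
    ext x
    rw [intervalIntegral.integral_const_mul]
    simp only [hh, hG, hg]
    ring
  have hI' : (fun t => Idbl α t l₂) = fun t => ∫ x in (0:ℝ)..1, h x * (1 - t * x) ^ (-α) :=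
    funext hI
  have hd1 : ∀ t, 0 < t → t < 1 → deriv (fun t => Idbl α t l₂) t =
      ∫ x in (0:ℝ)..1, (h x * (α * x)) * (1 - t * x) ^ (-(α + 1)) := by
    intro t ht0 ht1
    rw [hI']
    exact (aux_deriv hhi hα0 ht0 ht1).deriv
  have hhi2 : IntervalIntegrable (fun x => h x * (α * x)) MeasureTheory.volume 0 1 :=
    aux_int hhi (by fun_prop)
  have hhi3 : IntervalIntegrable (fun x => h x * (α * x) * ((α + 1) * x))
      MeasureTheory.volume 0 1 := aux_int hhi2 (by fun_prop)
  have hd2 : deriv (deriv (fun t => Idbl α t l₂)) l₁ =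
      ∫ x in (0:ℝ)..1, (h x * (α * x) * ((α + 1) * x)) * (1 - l₁ * x) ^ (-(α + 1 + 1)) := by
    have he : deriv (fun t => Idbl α t l₂) =ᶠ[nhds l₁]
        fun t => ∫ x in (0:ℝ)..1, (h x * (α * x)) * (1 - t * x) ^ (-(α + 1)) := by
      filter_upwards [Ioo_mem_nhds h0 h1] with t ht using hd1 t ht.1 ht.2
    rw [he.deriv_eq]
    exact (aux_deriv hhi2 (by linarith) h0 h1).deriv
  have i0 := (aux_int hhi (aux_cont (-α) h0 h1)).const_mul (α * (1 - α))
  have i1 := (aux_int hhi2 (aux_cont (-(α+1)) h0 h1)).const_mul (2 * (1 - α - l₁))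
  have i2 := (aux_int hhi3 (aux_cont (-(α+1+1)) h0 h1)).const_mul (l₁ * (1 - l₁))
  rw [hd2, hd1 l₁ h0 h1, hI l₁, ← intervalIntegral.integral_const_mul,
    ← intervalIntegral.integral_const_mul, ← intervalIntegral.integral_const_mul,
    ← intervalIntegral.integral_add i2 i1, ← intervalIntegral.integral_sub (i2.add i1) i0]
  have hsub : l₁ - l₂ ≠ 0 := sub_ne_zero.mpr hne
  rw [intervalIntegral.integral_eq_sub_of_hasDerivAt_of_le zero_le_one
    (f := fun x => (-α) * (x ^ (1 - α) * (1 - x) ^ (1 - α) * (1 - l₁ * x) ^ (-(α + 1))) * G x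
      + (1 / (l₁ - l₂)) * ((1 - l₂ * x) ^ α * (1 - l₁ * x) ^ (-α))) ?_ ?_
    ((i2.add i1).sub i0)]
  · have e0 : (0:ℝ) ^ (1 - α) = 0 := Real.zero_rpow (by linarith)
    have e1 : (1 - 1 : ℝ) ^ (1 - α) = 0 := by rw [sub_self]; exact e0
    have p1 : 0 < 1 - l₁ := by linarith
    have p2 : 0 < 1 - l₂ := by linarith [hl₂.2]
    simp only [e0, e1, mul_zero, zero_mul, mul_one, sub_zero, Real.one_rpow, zero_add]
    rw [Real.div_rpow p2.le p1.le, Real.rpow_neg p1.le]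
    ring
  · refine ContinuousOn.add (ContinuousOn.mul (continuousOn_const.mul ?_) hGc)
      (continuousOn_const.mul ((aux_cont α hl₂.1 hl₂.2).mul (aux_cont (-α) h0 h1)))
    refine ContinuousOn.mul (ContinuousOn.mul ?_ ?_) (aux_cont _ h0 h1)
    · exact ContinuousOn.rpow_const (by fun_prop) (fun x _ => Or.inr (by linarith))
    · exact ContinuousOn.rpow_const (by fun_prop) (fun x _ => Or.inr (by linarith))
  · intro x hx
    have x0 : 0 < x := hx.1
    have x1 : 0 < 1 - x := by linarith [hx.2]
    have y1 : 0 < 1 - l₁ * x := aux_pos h0 h1 x0.le hx.2.le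
    have y2 : 0 < 1 - l₂ * x := aux_pos hl₂.1 hl₂.2 x0.le hx.2.le
    have dx : HasDerivAt (fun x : ℝ => 1 - x) (-1) x := by
      simpa using (hasDerivAt_id x).const_sub 1
    have dl : ∀ l : ℝ, HasDerivAt (fun x : ℝ => 1 - l * x) (-l) x := fun l => by
      simpa using ((hasDerivAt_id x).const_mul l).const_sub 1
    have gcont : ContinuousOn g (Set.Ioo 0 1) := by
      intro z hz
      have z1 : 0 < 1 - z := by linarith [hz.2]
      have z2 : 0 < 1 - l₂ * z := aux_pos hl₂.1 hl₂.2 hz.1.le hz.2.le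
      refine ContinuousAt.continuousWithinAt ?_
      refine ContinuousAt.mul (ContinuousAt.mul ?_ ?_) ?_
      · exact ContinuousAt.rpow_const (by fun_prop) (Or.inl hz.1.ne')
      · exact ContinuousAt.rpow_const (by fun_prop) (Or.inl z1.ne')
      · exact ContinuousAt.rpow_const (by fun_prop) (Or.inl z2.ne')
    have dG : HasDerivAt G (g x) x := by
      refine intervalIntegral.integral_hasDerivAt_right ?_ ?_ ?_
      · refine hgi.mono_set ?_
        rw [Set.uIcc_of_le zero_le_one, Set.uIcc_of_le x0.le]
        exact Set.Icc_subset_Icc le_rfl hx.2.le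
      · exact gcont.stronglyMeasurableAtFilter isOpen_Ioo x hx
      · exact gcont.continuousAt (Ioo_mem_nhds hx.1 hx.2)
    have d1 := (hasDerivAt_id x).rpow_const (p := 1 - α) (Or.inl x0.ne')
    have d2 := dx.rpow_const (p := 1 - α) (Or.inl x1.ne')
    have d3 := (dl l₁).rpow_const (p := -(α+1)) (Or.inl y1.ne')
    have d4 := (dl l₂).rpow_const (p := α) (Or.inl y2.ne')
    have d5 := (dl l₁).rpow_const (p := -α) (Or.inl y1.ne')
    have D := ((((d1.mul d2).mul d3).const_mul (-α)).mul dG).add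
      ((d4.mul d5).const_mul (1 / (l₁ - l₂)))
    refine D.congr_deriv ?_
    simp only [Pi.mul_apply, id]
    simp only [hh, hg]
    generalize G x = Γ
    have r1 : x ^ (1 - α) = x * x ^ (-α) := by
      rw [sub_eq_add_neg, Real.rpow_add x0, Real.rpow_one]
    have r2 : (1 - x) ^ (1 - α) = (1 - x) * (1 - x) ^ (-α) := by
      rw [sub_eq_add_neg 1 α, Real.rpow_add x1, Real.rpow_one]
    have r3 : (1 - l₁ * x) ^ (-(α + 1)) = (1 - l₁ * x) * (1 - l₁ * x) ^ (-(α + 1 + 1)) := by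
      rw [show -(α+1) = 1 + -(α+1+1) by ring, Real.rpow_add y1, Real.rpow_one]
    have r4 : (1 - l₁ * x) ^ (-α) = (1 - l₁ * x) * (1 - l₁ * x) ^ (-(α + 1)) := by
      rw [show -α = 1 + -(α+1) by ring, Real.rpow_add y1, Real.rpow_one]
    have r5 : (1 - l₂ * x) ^ α = (1 - l₂ * x) * (1 - l₂ * x) ^ (α - 1) := by
      nth_rewrite 1 [show α = 1 + (α-1) by ring]
      rw [Real.rpow_add y2, Real.rpow_one]
    have r6 : x * x ^ (-α) * x ^ (α - 1) = 1 := by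
      rw [← r1, ← Real.rpow_add x0]; simp
    have r7 : (1 - x) * (1 - x) ^ (-α) * (1 - x) ^ (α - 1) = 1 := by
      rw [← r2, ← Real.rpow_add x1]; simp
    rw [show 1 - α - 1 = -α by ring, show -(α + 1) - 1 = -(α+1+1) by ring,
      show -α - 1 = -(α+1) by ring]
    rw [r5, r4, r3, r1, r2]
    generalize x ^ (-α) = A at *
    generalize x ^ (α - 1) = A' at *
    generalize (1 - x) ^ (-α) = B at *
    generalize (1 - x) ^ (α - 1) = B' at *
    generalize (1 - l₁ * x) ^ (-(α + 1 + 1)) = Q at *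
    generalize (1 - l₂ * x) ^ (α - 1) = R at *
    have key : (-α) * (x * A * ((1 - x) * B) * ((1 - l₁ * x) * Q)) * (A' * B' * R)
        = -α * ((1 - l₁ * x) * Q) * R := by
      linear_combination (-α * ((1 - l₁ * x) * Q) * R) * ((1 - x) * B * B') * r6
        + (-α * ((1 - l₁ * x) * Q) * R) * r7
    rw [key]
    field_simp
    ring
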